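/- Let X be drawn uniformly from the nonempty set 𝒢(n,m,d₁,d₂), with d₁ < m. Let a > 0 and let Q be an n×m real matrix, not identically zero, with all entries in [0,a]. Set f_Q(X) = Σ_{u∈[n], v∈[m]} Q_{uv}·X_{uv}, μ = (d₁/m)·Σ_{u,v} Q_{uv}, σ̃² = (d₁/m)·Σ_{u,v} Q_{uv}², c₀ = (1/3)·(1 − d₁/m), and γ₀ = d₁/(m−d₁). Then for all t ≥ 0: ℙ( f_Q(X) − μ ≥ γ₀·μ + t ) ≤ exp( −c₀·(σ̃²/a²)·h(a·t/σ̃²) ) and ℙ( |f_Q(X) − μ| ≥ γ₀·μ + t ) ≤ 2·exp( −c₀·t²/(2·(σ̃² + a·t/3)) ), where h(x) = (1+x)·log(1+x) − x. -/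

import Mathlib

open scoped Classical BigOperators

noncomputable section

/-- The set of biadjacency matrices of `(n,m,d₁,d₂)`-bipartite biregular graphs. -/
def BBG (n m d₁ d₂ : ℕ) : Finset (Fin n → Fin m → Bool) :=
  Finset.univ.filter fun X =>
    (∀ u, (∑ v, if X u v then 1 else 0) = d₁) ∧
    (∀ v, (∑ u, if X u v then 1 else 0) = d₂)

/-- `h(x) = (1+x)·log(1+x) − x`. -/
def hfun (x : ℝ) : ℝ := (1 + x) * Real.log (1 + x) - x

/-- The linear function `f_Q(X) = Σ_{u,v} Q_{uv} X_{uv}`. -/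
def fQ {n m : ℕ} (Q : Matrix (Fin n) (Fin m) ℝ) (X : Fin n → Fin m → Bool) : ℝ :=
  ∑ u, ∑ v, Q u v * (if X u v then (1 : ℝ) else 0)

/-!
Give `X` the following jump dynamics: two columns `v`, `v'` exchange their entries within two rows
`u`, `u'` whenever `X u v = X u' v' = 0` and `X u v' = X u' v = 1`, at the reciprocal of the number
of rows containing a `1` in column `v` but not in column `v'`. Two columns of equal sum have equally
many such rows in either order, so the uniform measure is reversible, and for `X u v = 0`,
`X u v' = 1` the rates add up to exactly `1` over `u'`. Hence the total rate of creating the edge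
`(u, v)` is `d₁ * (1 - X u v)` and that of deleting it is `(m - d₁) * X u v`, which gives the exact
identity `m * 𝔼[X u v * G X] = d₁ * 𝔼[G X] + 𝔼[∑ rate * (G (switch X) - G X)]`.

With `G = exp (θ * f_Q)`, summed against `Q`, this bounds the logarithmic derivative of the moment
generating function of `f_Q` by its mean plus a second-order term, since a jump creating `(u, v)`
changes `f_Q` by at most `Q u v + Q u' v'`. Integrating and applying Chernoff's bound gives
Bennett's inequality for the upper and a Gaussian bound for the lower tail, around the true mean
(`γ₀ = 0`) and with `c₀ = 1 / 2`.
-/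

lemma le_mul_exp_of_deriv_le {f f' g g' : ℝ → ℝ} {a b : ℝ} (hab : a ≤ b)
    (hf : ∀ x ∈ Set.Icc a b, HasDerivAt f (f' x) x) (hg : ∀ x ∈ Set.Icc a b, HasDerivAt g (g' x) x)
    (hle : ∀ x ∈ Set.Icc a b, f' x ≤ f x * g' x) :
    f b ≤ f a * Real.exp (g b - g a) := by
  have hderiv (x) (hx : x ∈ Set.Icc a b) : HasDerivAt (fun x => f x * Real.exp (-g x))
      ((f' x - f x * g' x) * Real.exp (-g x)) x :=
    ((hf x hx).fun_mul (hg x hx).fun_neg.exp).congr_deriv (by ring)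
  have hanti : AntitoneOn (fun x => f x * Real.exp (-g x)) (Set.Icc a b) := by
    refine antitoneOn_of_hasDerivWithinAt_nonpos (convex_Icc a b)
      (fun x hx => (hderiv x hx).continuousAt.continuousWithinAt)
      (fun x hx => (hderiv x (interior_subset hx)).hasDerivWithinAt) fun x hx => ?_
    exact mul_nonpos_of_nonpos_of_nonneg (sub_nonpos.2 (hle x (interior_subset hx)))
      (Real.exp_nonneg _)
  calc f b = f b * Real.exp (-g b) * Real.exp (g b) := by
        rw [mul_assoc, ← Real.exp_add, neg_add_cancel, Real.exp_zero, mul_one]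
    _ ≤ f a * Real.exp (-g a) * Real.exp (g b) :=
        mul_le_mul_of_nonneg_right (hanti (Set.left_mem_Icc.2 hab) (Set.right_mem_Icc.2 hab) hab)
          (Real.exp_nonneg _)
    _ = f a * Real.exp (g b - g a) := by
        rw [mul_assoc, ← Real.exp_add, neg_add_eq_sub]

lemma hasDerivAt_sum_exp_mul {ι : Type*} (S : Finset ι) (f : ι → ℝ) (θ : ℝ) :
    HasDerivAt (fun s => ∑ i ∈ S, Real.exp (s * f i)) (∑ i ∈ S, f i * Real.exp (θ * f i)) θ :=
  HasDerivAt.fun_sum fun i _ => (hasDerivAt_mul_const (f i)).exp.congr_deriv (mul_comm _ _)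

lemma card_filter_le_card_mul_exp {ι : Type*} {S : Finset ι} {f : ι → ℝ} {θ ψ : ℝ} (hθ : 0 ≤ θ)
    (hf : ∑ i ∈ S, Real.exp (θ * f i) ≤ S.card * Real.exp ψ) (c : ℝ) :
    ((S.filter fun i => c ≤ f i).card : ℝ) ≤ S.card * Real.exp (ψ - θ * c) := by
  rw [Real.exp_sub, ← mul_div_assoc, le_div_iff₀ (Real.exp_pos _)]
  calc ((S.filter fun i => c ≤ f i).card : ℝ) * Real.exp (θ * c)
      = ∑ i ∈ S with c ≤ f i, Real.exp (θ * c) := by rw [Finset.sum_const, nsmul_eq_mul]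
    _ ≤ ∑ i ∈ S with c ≤ f i, Real.exp (θ * f i) := by
        gcongr with i hi
        exact (Finset.mem_filter.1 hi).2
    _ ≤ ∑ i ∈ S, Real.exp (θ * f i) :=
        Finset.sum_le_sum_of_subset_of_nonneg (Finset.filter_subset _ _)
          fun i _ _ => Real.exp_nonneg _
    _ ≤ S.card * Real.exp ψ := hf

lemma card_filter_le_abs_le {ι : Type*} (S : Finset ι) (f : ι → ℝ) (c : ℝ) :
    (S.filter fun i => c ≤ |f i|).card ≤
      (S.filter fun i => c ≤ f i).card + (S.filter fun i => c ≤ -f i).card := by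
  simp only [le_abs, Finset.filter_or]
  exact Finset.card_union_le _ _

lemma exp_mul_sub_one_le_chord {b s : ℝ} (θ : ℝ) (hb : 0 < b) (hs : s ∈ Set.Icc 0 b) :
    Real.exp (θ * s) - 1 ≤ (Real.exp (b * θ) - 1) / b * s := by
  have h := convexOn_exp.2 (Set.mem_univ (b * θ)) (Set.mem_univ 0) (div_nonneg hs.1 hb.le)
    (sub_nonneg.2 (div_le_one_of_le₀ hs.2 hb.le)) (add_sub_cancel _ _)
  simp only [smul_eq_mul, mul_zero, add_zero, Real.exp_zero, mul_one] at h
  rw [show s / b * (b * θ) = θ * s by field_simp] at h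
  calc Real.exp (θ * s) - 1 ≤ s / b * Real.exp (b * θ) + (1 - s / b) - 1 := by gcongr
    _ = (Real.exp (b * θ) - 1) / b * s := by ring

-- `sq_div_le_hfun` solved for the logarithm, so that the difference of the two sides has a
-- rational derivative.
lemma le_log_one_add {x : ℝ} (hx : 0 ≤ x) :
    x * (6 + 5 * x) / (2 * (1 + x) * (3 + x)) ≤ Real.log (1 + x) := by
  have hderiv (y) (hy : y ∈ Set.Ici (0 : ℝ)) : HasDerivAt
      (fun y => Real.log (1 + y) - y * (6 + 5 * y) / (2 * (1 + y) * (3 + y)))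
      (y ^ 3 / ((1 + y) ^ 2 * (3 + y) ^ 2)) y := by
    have hy0 : 0 ≤ y := hy
    have hlog := ((hasDerivAt_id' y).const_add 1).log (by positivity)
    have hnum := (hasDerivAt_id' y).fun_mul (((hasDerivAt_id' y).const_mul 5).const_add 6)
    have hden := (((hasDerivAt_id' y).const_add 1).const_mul 2).fun_mul
      ((hasDerivAt_id' y).const_add 3)
    refine (hlog.sub (hnum.fun_div hden (by positivity))).congr_deriv ?_
    field_simp
    ring
  have hmono := monotoneOn_of_hasDerivWithinAt_nonneg (convex_Ici (0 : ℝ))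
    (fun y hy => (hderiv y hy).continuousAt.continuousWithinAt)
    (fun y hy => (hderiv y (interior_subset hy)).hasDerivWithinAt) fun y hy => by
      have hy0 : 0 ≤ y := interior_subset hy
      positivity
  simpa using hmono (Set.mem_Ici.2 le_rfl) (Set.mem_Ici.2 hx) hx

lemma sq_div_le_hfun {x : ℝ} (hx : 0 ≤ x) : x ^ 2 / (2 * (1 + x / 3)) ≤ hfun x := by
  calc x ^ 2 / (2 * (1 + x / 3))
      = (1 + x) * (x * (6 + 5 * x) / (2 * (1 + x) * (3 + x))) - x := by field_simp; ring
    _ ≤ hfun x := by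
      unfold hfun
      gcongr
      exact le_log_one_add hx

section Switching

variable {n m d₁ d₂ : ℕ} {X : Fin n → Fin m → Bool}

/-- The entry `X u v` of a biadjacency matrix as a real number. -/
def entry (X : Fin n → Fin m → Bool) (u : Fin n) (v : Fin m) : ℝ :=
  if X u v then 1 else 0

lemma entry_nonneg (X : Fin n → Fin m → Bool) (u : Fin n) (v : Fin m) : 0 ≤ entry X u v := by
  unfold entry; split_ifs <;> norm_num

lemma entry_le_one (X : Fin n → Fin m → Bool) (u : Fin n) (v : Fin m) : entry X u v ≤ 1 := by
  unfold entry; split_ifs <;> norm_num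

lemma mem_BBG_iff_sum_entry :
    X ∈ BBG n m d₁ d₂ ↔ (∀ u, ∑ v, entry X u v = d₁) ∧ ∀ v, ∑ u, entry X u v = d₂ := by
  simp only [BBG, entry, Finset.mem_filter, Finset.mem_univ, true_and]
  norm_cast

lemma fQ_eq_sum_entry (Q : Matrix (Fin n) (Fin m) ℝ) (X : Fin n → Fin m → Bool) :
    fQ Q X = ∑ u, ∑ v, Q u v * entry X u v := rfl

lemma fQ_neg (Q : Matrix (Fin n) (Fin m) ℝ) (X : Fin n → Fin m → Bool) :
    fQ (-Q) X = -fQ Q X := by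
  simp only [fQ, Matrix.neg_apply, neg_mul, Finset.sum_neg_distrib]

/-- The number of common neighbours of the columns `v` and `v'`. -/
def codegree (X : Fin n → Fin m → Bool) (v v' : Fin m) : ℝ :=
  ∑ a, entry X a v * entry X a v'

lemma codegree_comm (X : Fin n → Fin m → Bool) (v v' : Fin m) :
    codegree X v v' = codegree X v' v := by
  simp only [codegree, mul_comm]

/-- The matrix obtained from `X` by exchanging the columns `v` and `v'` within the rows `u` and
`u'`. It preserves the column sums if `X u v = X u' v'` and `X u v' = X u' v`. -/
def switch (u u' : Fin n) (v v' : Fin m) (X : Fin n → Fin m → Bool) : Fin n → Fin m → Bool :=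
  fun a b => if a = u ∨ a = u' then X a (Equiv.swap v v' b) else X a b

lemma switch_involutive (u u' : Fin n) (v v' : Fin m) :
    Function.Involutive (switch u u' v v') := by
  intro X
  funext a b
  by_cases h : a = u ∨ a = u' <;> simp [switch, h]

lemma codegree_switch (u u' : Fin n) (v v' : Fin m) (X : Fin n → Fin m → Bool) :
    codegree (switch u u' v v' X) v v' = codegree X v v' := by
  refine Finset.sum_congr rfl fun a _ => ?_
  by_cases h : a = u ∨ a = u' <;> simp [entry, switch, h, mul_comm]

/-- The rate at which `X` jumps to `switch u u' v v' X`, creating the edges `(u, v)`, `(u', v')`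
and deleting the edges `(u, v')`, `(u', v)`. For `X ∈ BBG n m d₁ d₂` the denominator is the number
of rows `u'` admissible for given `u`, `v`, `v'`, so that the rates of these jumps add up to `1`;
if there is no admissible row then the rate is `0 / 0 = 0`. -/
def switchRate (d₂ : ℕ) (X : Fin n → Fin m → Bool) (u : Fin n) (v : Fin m) (u' : Fin n)
    (v' : Fin m) : ℝ :=
  (1 - entry X u v) * entry X u v' * entry X u' v * (1 - entry X u' v') / (d₂ - codegree X v v')

lemma switchRate_symm (d₂ : ℕ) (X : Fin n → Fin m → Bool) (u u' : Fin n) (v v' : Fin m) :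
    switchRate d₂ X u v u' v' = switchRate d₂ X u' v' u v := by
  unfold switchRate
  rw [codegree_comm X v v']
  ring

lemma switchRate_switch (d₂ : ℕ) (X : Fin n → Fin m → Bool) (u u' : Fin n) (v v' : Fin m) :
    switchRate d₂ (switch u u' v v' X) u v' u' v = switchRate d₂ X u v u' v' := by
  unfold switchRate
  rw [codegree_comm _ v' v, codegree_switch]
  simp [entry, switch]

lemma entry_eq_of_switchRate_ne_zero {u u' : Fin n} {v v' : Fin m}
    (h : switchRate d₂ X u v u' v' ≠ 0) :
    X u v = false ∧ X u v' = true ∧ X u' v = true ∧ X u' v' = false := by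
  simp only [switchRate, entry, ne_eq, div_eq_zero_iff, mul_eq_zero, not_or] at h
  grind

lemma entry_switch {u u' : Fin n} {v v' : Fin m} (h : switchRate d₂ X u v u' v' ≠ 0)
    (a : Fin n) (b : Fin m) :
    entry (switch u u' v v' X) a b = entry X a b +
      (Pi.single u 1 - Pi.single u' 1 : Fin n → ℝ) a *
        (Pi.single v 1 - Pi.single v' 1 : Fin m → ℝ) b := by
  obtain ⟨huv, huv', hu'v, hu'v'⟩ := entry_eq_of_switchRate_ne_zero h
  have hu : u ≠ u' := by rintro rfl; simp_all
  have hv : v ≠ v' := by rintro rfl; simp_all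
  simp only [entry, switch, Pi.sub_apply, Pi.single_apply, Equiv.swap_apply_def]
  grind

lemma switch_mem_BBG_iff {u u' : Fin n} {v v' : Fin m} (h : switchRate d₂ X u v u' v' ≠ 0) :
    switch u u' v v' X ∈ BBG n m d₁ d₂ ↔ X ∈ BBG n m d₁ d₂ := by
  simp [mem_BBG_iff_sum_entry, entry_switch h, Finset.sum_add_distrib, ← Finset.mul_sum,
    ← Finset.sum_mul]

lemma fQ_switch {u u' : Fin n} {v v' : Fin m} (h : switchRate d₂ X u v u' v' ≠ 0)
    (Q : Matrix (Fin n) (Fin m) ℝ) :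
    fQ Q (switch u u' v v' X) = fQ Q X + (Q u v + Q u' v' - Q u v' - Q u' v) := by
  simp only [fQ_eq_sum_entry, entry_switch h, mul_add, Finset.sum_add_distrib, Pi.sub_apply,
    Pi.single_apply, mul_sub, Finset.sum_sub_distrib, mul_ite, mul_zero, mul_one,
    Finset.sum_ite_eq', Finset.mem_univ, if_true]
  ring

lemma sum_switchRate_mul_comp_switch (u u' : Fin n) (v v' : Fin m)
    (G : (Fin n → Fin m → Bool) → ℝ) :
    ∑ X ∈ BBG n m d₁ d₂, switchRate d₂ X u v u' v' * G (switch u u' v v' X) =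
      ∑ X ∈ BBG n m d₁ d₂, switchRate d₂ X u v' u' v * G X := by
  simp only [← Finset.sum_ite_mem_eq (BBG n m d₁ d₂)]
  rw [← Equiv.sum_comp (switch_involutive u u' v v').toPerm
    fun X => if X ∈ BBG n m d₁ d₂ then switchRate d₂ X u v' u' v * G X else 0]
  refine Finset.sum_congr rfl fun X _ => ?_
  rw [Function.Involutive.coe_toPerm, switchRate_switch]
  by_cases h : switchRate d₂ X u v u' v' = 0
  · simp [h]
  · simp only [switch_mem_BBG_iff h]

lemma sum_entry_mul_one_sub_entry (hX : X ∈ BBG n m d₁ d₂) (v v' : Fin m) :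
    ∑ u, entry X u v * (1 - entry X u v') = d₂ - codegree X v v' := by
  simp only [mul_sub, mul_one, Finset.sum_sub_distrib, (mem_BBG_iff_sum_entry.1 hX).2, codegree]

lemma sum_switchRate (hX : X ∈ BBG n m d₁ d₂) (u : Fin n) (v v' : Fin m) :
    ∑ u', switchRate d₂ X u v u' v' = (1 - entry X u v) * entry X u v' := by
  have hsum : ∑ u', switchRate d₂ X u v u' v' =
      (1 - entry X u v) * entry X u v' * (d₂ - codegree X v v') / (d₂ - codegree X v v') := by
    simp only [switchRate, ← sum_entry_mul_one_sub_entry hX v v', ← Finset.sum_div,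
      Finset.mul_sum, mul_assoc]
  rw [hsum]
  refine mul_div_cancel_of_imp fun hzero => ?_
  -- If `v'` has no `1` that `v` lacks, then neither conversely, as both columns have sum `d₂`.
  rw [codegree_comm, ← sum_entry_mul_one_sub_entry hX, Finset.sum_eq_zero_iff_of_nonneg fun a _ =>
    mul_nonneg (entry_nonneg X a v') (sub_nonneg.2 (entry_le_one X a v))] at hzero
  rw [mul_comm]
  exact hzero u (Finset.mem_univ u)

lemma sum_sum_switchRate (hX : X ∈ BBG n m d₁ d₂) (u : Fin n) (v : Fin m) :
    ∑ u', ∑ v', switchRate d₂ X u v u' v' = d₁ * (1 - entry X u v) := by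
  rw [Finset.sum_comm]
  simp only [sum_switchRate hX, ← Finset.mul_sum, (mem_BBG_iff_sum_entry.1 hX).1]
  exact mul_comm _ _

lemma sum_sum_switchRate_reverse (hX : X ∈ BBG n m d₁ d₂) (u : Fin n) (v : Fin m) :
    ∑ u', ∑ v', switchRate d₂ X u v' u' v = (m - d₁) * entry X u v := by
  rw [Finset.sum_comm]
  simp only [sum_switchRate hX, ← Finset.sum_mul, Finset.sum_sub_distrib,
    (mem_BBG_iff_sum_entry.1 hX).1]
  simp

lemma switchRate_nonneg (hX : X ∈ BBG n m d₁ d₂) (u u' : Fin n) (v v' : Fin m) :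
    0 ≤ switchRate d₂ X u v u' v' := by
  have one_sub_nonneg (a : Fin n) (b : Fin m) : 0 ≤ 1 - entry X a b :=
    sub_nonneg.2 (entry_le_one X a b)
  have nonneg := entry_nonneg X
  refine div_nonneg (mul_nonneg (mul_nonneg (mul_nonneg (one_sub_nonneg _ _) (nonneg _ _))
    (nonneg _ _)) (one_sub_nonneg _ _)) ?_
  rw [← sum_entry_mul_one_sub_entry hX]
  exact Finset.sum_nonneg fun a _ => mul_nonneg (nonneg _ _) (one_sub_nonneg _ _)

lemma sum_entry_mul (u : Fin n) (v : Fin m) (G : (Fin n → Fin m → Bool) → ℝ) :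
    m * ∑ X ∈ BBG n m d₁ d₂, entry X u v * G X = d₁ * ∑ X ∈ BBG n m d₁ d₂, G X +
      ∑ X ∈ BBG n m d₁ d₂, ∑ u', ∑ v',
        switchRate d₂ X u v u' v' * (G (switch u u' v v' X) - G X) := by
  have inflow : ∑ X ∈ BBG n m d₁ d₂, ∑ u', ∑ v',
      switchRate d₂ X u v u' v' * G (switch u u' v v' X) =
      ∑ X ∈ BBG n m d₁ d₂, (m - d₁) * entry X u v * G X := by
    simp only [Finset.sum_comm (s := BBG n m d₁ d₂), sum_switchRate_mul_comp_switch]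
    simp only [← Finset.sum_comm (s := BBG n m d₁ d₂), ← Finset.sum_mul]
    exact Finset.sum_congr rfl fun X hX => by rw [sum_sum_switchRate_reverse hX]
  have outflow : ∑ X ∈ BBG n m d₁ d₂, ∑ u', ∑ v', switchRate d₂ X u v u' v' * G X =
      ∑ X ∈ BBG n m d₁ d₂, d₁ * (1 - entry X u v) * G X := by
    simp only [← Finset.sum_mul]
    exact Finset.sum_congr rfl fun X hX => by rw [sum_sum_switchRate hX]
  simp only [mul_sub, Finset.sum_sub_distrib, inflow, outflow]
  simp only [Finset.mul_sum, ← Finset.sum_add_distrib, ← Finset.sum_sub_distrib]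
  exact Finset.sum_congr rfl fun X _ => by ring

end Switching

section ExponentialMoment

variable {n m d₁ d₂ : ℕ} {Q : Matrix (Fin n) (Fin m) ℝ}

/-- The mean `(d₁ / m) * ∑ Q u v` of `fQ Q X` for `X` uniform in `BBG n m d₁ d₂`. -/
def fQMean (d₁ : ℕ) (Q : Matrix (Fin n) (Fin m) ℝ) : ℝ :=
  (d₁ : ℝ) / m * ∑ u, ∑ v, Q u v

/-- The variance proxy `(d₁ / m) * ∑ (Q u v) ^ 2` of `fQ Q X`: the sum of the second moments of
its terms. -/
def fQVarianceProxy (d₁ : ℕ) (Q : Matrix (Fin n) (Fin m) ℝ) : ℝ :=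
  (d₁ : ℝ) / m * ∑ u, ∑ v, Q u v ^ 2

lemma fQMean_neg (d₁ : ℕ) (Q : Matrix (Fin n) (Fin m) ℝ) : fQMean d₁ (-Q) = -fQMean d₁ Q := by
  simp only [fQMean, Matrix.neg_apply, Finset.sum_neg_distrib, mul_neg]

lemma fQVarianceProxy_neg (d₁ : ℕ) (Q : Matrix (Fin n) (Fin m) ℝ) :
    fQVarianceProxy d₁ (-Q) = fQVarianceProxy d₁ Q := by
  simp only [fQVarianceProxy, Matrix.neg_apply, neg_sq]

lemma fQVarianceProxy_pos (hd₁ : 0 < d₁) (hQ : Q ≠ 0) : 0 < fQVarianceProxy d₁ Q := by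
  obtain ⟨u, v, huv⟩ : ∃ u v, Q u v ≠ 0 := by
    by_contra! h
    exact hQ (Matrix.ext h)
  have hm : 0 < m := v.pos
  refine mul_pos (by positivity) (Finset.sum_pos' (fun u _ => by positivity)
    ⟨u, Finset.mem_univ u, Finset.sum_pos' (fun v _ => by positivity) ⟨v, Finset.mem_univ v, ?_⟩⟩)
  positivity

lemma sum_switchRate_mul_sq_le {X : Fin n → Fin m → Bool} (hX : X ∈ BBG n m d₁ d₂)
    (Q : Matrix (Fin n) (Fin m) ℝ) :
    ∑ u, ∑ v, ∑ u', ∑ v', switchRate d₂ X u v u' v' * Q u v ^ 2 ≤ d₁ * ∑ u, ∑ v, Q u v ^ 2 := by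
  simp only [Finset.mul_sum, ← Finset.sum_mul, sum_sum_switchRate hX]
  gcongr with u _ v _
  exact mul_le_of_le_one_right (Nat.cast_nonneg _) (sub_le_self 1 (entry_nonneg X u v))

lemma sum_switchRate_mul_sq_symm (X : Fin n → Fin m → Bool) (Q : Matrix (Fin n) (Fin m) ℝ) :
    ∑ u, ∑ v, ∑ u', ∑ v', switchRate d₂ X u v u' v' * Q u' v' ^ 2 =
      ∑ u, ∑ v, ∑ u', ∑ v', switchRate d₂ X u v u' v' * Q u v ^ 2 := by
  calc _ = ∑ p : Fin n × Fin m, ∑ q : Fin n × Fin m,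
        switchRate d₂ X p.1 p.2 q.1 q.2 * Q q.1 q.2 ^ 2 := by simp only [Fintype.sum_prod_type]
    _ = ∑ q : Fin n × Fin m, ∑ p : Fin n × Fin m,
        switchRate d₂ X q.1 q.2 p.1 p.2 * Q q.1 q.2 ^ 2 := by
      rw [Finset.sum_comm]
      simp only [fun p q : Fin n × Fin m => switchRate_symm d₂ X p.1 q.1 p.2 q.2]
    _ = _ := by simp only [Fintype.sum_prod_type]

lemma sum_switchRate_mul_mul_add_le {X : Fin n → Fin m → Bool} (hX : X ∈ BBG n m d₁ d₂)
    (Q : Matrix (Fin n) (Fin m) ℝ) :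
    ∑ u, ∑ v, ∑ u', ∑ v', switchRate d₂ X u v u' v' * (Q u v * (Q u v + Q u' v')) ≤
      2 * d₁ * ∑ u, ∑ v, Q u v ^ 2 := by
  calc _ ≤ ∑ u, ∑ v, ∑ u', ∑ v', (3 / 2 * (switchRate d₂ X u v u' v' * Q u v ^ 2) +
        1 / 2 * (switchRate d₂ X u v u' v' * Q u' v' ^ 2)) := by
        gcongr with u _ v _ u' _ v' _
        nlinarith [mul_nonneg (switchRate_nonneg hX u u' v v') (sq_nonneg (Q u v - Q u' v'))]
    _ = 2 * ∑ u, ∑ v, ∑ u', ∑ v', switchRate d₂ X u v u' v' * Q u v ^ 2 := by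
        simp only [Finset.sum_add_distrib, ← Finset.mul_sum, sum_switchRate_mul_sq_symm]
        ring
    _ ≤ _ := by linarith [sum_switchRate_mul_sq_le hX Q]

lemma sum_fQ_mul (Q : Matrix (Fin n) (Fin m) ℝ) (G : (Fin n → Fin m → Bool) → ℝ) :
    m * ∑ X ∈ BBG n m d₁ d₂, fQ Q X * G X =
      d₁ * (∑ u, ∑ v, Q u v) * ∑ X ∈ BBG n m d₁ d₂, G X +
        ∑ X ∈ BBG n m d₁ d₂, ∑ u, ∑ v, ∑ u', ∑ v',
          switchRate d₂ X u v u' v' * (Q u v * (G (switch u u' v v' X) - G X)) := by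
  calc _ = ∑ u, ∑ v, Q u v * (m * ∑ X ∈ BBG n m d₁ d₂, entry X u v * G X) := by
        simp only [fQ_eq_sum_entry, Finset.sum_mul, Finset.mul_sum]
        rw [Finset.sum_comm]
        refine Finset.sum_congr rfl fun u _ => ?_
        rw [Finset.sum_comm]
        exact Finset.sum_congr rfl fun v _ => Finset.sum_congr rfl fun X _ => by ring
    _ = _ := by
        simp only [sum_entry_mul, mul_add, Finset.sum_add_distrib]
        congr 1
        · simp only [← Finset.sum_mul, mul_left_comm _ (d₁ : ℝ), mul_assoc, ← Finset.mul_sum]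
        · simp only [Finset.sum_comm (s := BBG n m d₁ d₂), Finset.mul_sum, mul_left_comm]

lemma sum_fQ_mul_exp_le {θ c : ℝ} (hc : 0 ≤ c)
    (hQ : ∀ u v u' v', Q u v * (Real.exp (θ * (Q u v + Q u' v' - Q u v' - Q u' v)) - 1) ≤
      c * (Q u v * (Q u v + Q u' v'))) :
    ∑ X ∈ BBG n m d₁ d₂, fQ Q X * Real.exp (θ * fQ Q X) ≤
      (∑ X ∈ BBG n m d₁ d₂, Real.exp (θ * fQ Q X)) *
        (fQMean d₁ Q + 2 * fQVarianceProxy d₁ Q * c) := by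
  obtain rfl | hm := m.eq_zero_or_pos
  · simp [fQ, fQMean, fQVarianceProxy]
  have jump_le {X} (hX : X ∈ BBG n m d₁ d₂) (u v u' v') : switchRate d₂ X u v u' v' *
      (Q u v * (Real.exp (θ * fQ Q (switch u u' v v' X)) - Real.exp (θ * fQ Q X))) ≤
      c * Real.exp (θ * fQ Q X) *
        (switchRate d₂ X u v u' v' * (Q u v * (Q u v + Q u' v'))) := by
    by_cases h : switchRate d₂ X u v u' v' = 0
    · simp only [h, zero_mul, mul_zero, le_refl]
    rw [fQ_switch h, mul_add θ, Real.exp_add]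
    have := mul_le_mul_of_nonneg_left (hQ u v u' v') (mul_nonneg (switchRate_nonneg hX u u' v v')
      (Real.exp_nonneg (θ * fQ Q X)))
    linarith
  have drift_le {X} (hX : X ∈ BBG n m d₁ d₂) : ∑ u, ∑ v, ∑ u', ∑ v', switchRate d₂ X u v u' v' *
      (Q u v * (Real.exp (θ * fQ Q (switch u u' v v' X)) - Real.exp (θ * fQ Q X))) ≤
      c * Real.exp (θ * fQ Q X) * (2 * d₁ * ∑ u, ∑ v, Q u v ^ 2) := by
    refine le_trans ?_ (mul_le_mul_of_nonneg_left (sum_switchRate_mul_mul_add_le hX Q)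
      (by positivity))
    simp only [Finset.mul_sum (a := c * Real.exp (θ * fQ Q X))]
    gcongr ∑ u, ∑ v, ∑ u', ∑ v', ?_ with u _ v _ u' _ v' _
    exact jump_le hX u v u' v'
  have key := (sum_fQ_mul (d₁ := d₁) (d₂ := d₂) Q fun X => Real.exp (θ * fQ Q X)).le.trans
    (add_le_add_right (Finset.sum_le_sum fun X hX => drift_le hX) _)
  rw [← Finset.sum_mul, ← Finset.mul_sum] at key
  refine le_of_mul_le_mul_left (key.trans_eq ?_) (Nat.cast_pos.2 hm)
  unfold fQMean fQVarianceProxy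
  field_simp

lemma sum_exp_mul_fQ_le {c C : ℝ → ℝ} (hC : ∀ s, HasDerivAt C (c s) s)
    (hC0 : C 0 = 0) (hc : ∀ s, 0 ≤ s → 0 ≤ c s)
    (hQ : ∀ s, 0 ≤ s → ∀ u v u' v',
      Q u v * (Real.exp (s * (Q u v + Q u' v' - Q u v' - Q u' v)) - 1) ≤
        c s * (Q u v * (Q u v + Q u' v')))
    {θ : ℝ} (hθ : 0 ≤ θ) :
    ∑ X ∈ BBG n m d₁ d₂, Real.exp (θ * fQ Q X) ≤ (BBG n m d₁ d₂).card *
      Real.exp (θ * fQMean d₁ Q + 2 * fQVarianceProxy d₁ Q * C θ) := by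
  have h := le_mul_exp_of_deriv_le hθ
    (fun s _ => hasDerivAt_sum_exp_mul (BBG n m d₁ d₂) (fQ Q) s)
    (fun s _ => (hasDerivAt_mul_const (fQMean d₁ Q)).add
      ((hC s).const_mul (2 * fQVarianceProxy d₁ Q)))
    fun s hs => sum_fQ_mul_exp_le (hc s hs.1) (hQ s hs.1)
  simpa [hC0] using h

end ExponentialMoment

section Tails

variable {n m d₁ d₂ : ℕ} {Q : Matrix (Fin n) (Fin m) ℝ} {a t : ℝ}

lemma sum_exp_mul_fQ_le_of_mem_Icc (ha : 0 < a)
    (hQ : ∀ u v, Q u v ∈ Set.Icc 0 a) {θ : ℝ} (hθ : 0 ≤ θ) :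
    ∑ X ∈ BBG n m d₁ d₂, Real.exp (θ * fQ Q X) ≤ (BBG n m d₁ d₂).card *
      Real.exp (θ * fQMean d₁ Q + 2 * fQVarianceProxy d₁ Q *
        ((Real.exp (2 * a * θ) - 1 - 2 * a * θ) / (2 * a) ^ 2)) := by
  refine sum_exp_mul_fQ_le (c := fun s => (Real.exp (2 * a * s) - 1) / (2 * a))
    (C := fun s => (Real.exp (2 * a * s) - 1 - 2 * a * s) / (2 * a) ^ 2) (fun s => ?_) (by simp)
    (fun s hs => ?_) (fun s hs u v u' v' => ?_) hθ
  · have hlin := hasDerivAt_const_mul (x := s) (2 * a)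
    refine (((hlin.exp.sub_const 1).sub hlin).div_const _).congr_deriv ?_
    field_simp
  · exact div_nonneg (sub_nonneg.2 (Real.one_le_exp (by positivity))) (by positivity)
  · obtain ⟨huv_nonneg, huv_le⟩ := hQ u v
    obtain ⟨hu'v'_nonneg, hu'v'_le⟩ := hQ u' v'
    have jump_le : Q u v + Q u' v' - Q u v' - Q u' v ≤ Q u v + Q u' v' := by
      linarith [(hQ u v').1, (hQ u' v).1]
    calc _ ≤ Q u v * (Real.exp (s * (Q u v + Q u' v')) - 1) := by gcongr
      _ ≤ Q u v * ((Real.exp (2 * a * s) - 1) / (2 * a) * (Q u v + Q u' v')) := by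
          gcongr
          exact exp_mul_sub_one_le_chord s (by positivity) ⟨by positivity, by linarith⟩
      _ = _ := mul_left_comm _ _ _

lemma sum_exp_mul_neg_fQ_le_of_nonneg (hQ : ∀ u v, 0 ≤ Q u v) {θ : ℝ} (hθ : 0 ≤ θ) :
    ∑ X ∈ BBG n m d₁ d₂, Real.exp (θ * -fQ Q X) ≤ (BBG n m d₁ d₂).card *
      Real.exp (θ * -fQMean d₁ Q + fQVarianceProxy d₁ Q * θ ^ 2) := by
  have h := sum_exp_mul_fQ_le (d₁ := d₁) (d₂ := d₂) (Q := -Q) (c := fun s => s)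
    (C := fun s => s ^ 2 / 2)
    (fun s => ((hasDerivAt_pow 2 s).div_const 2).congr_deriv (by norm_num)) (by norm_num)
    (fun s hs => hs) (fun s hs u v u' v' => ?_) hθ
  · simp only [fQ_neg, fQMean_neg, fQVarianceProxy_neg] at h
    convert h using 4
    ring
  · simp only [Matrix.neg_apply]
    set Δ := Q u v + Q u' v' - Q u v' - Q u' v with hΔ
    calc _ = Q u v * (1 - Real.exp (s * -Δ)) := by rw [hΔ]; ring_nf
      _ ≤ Q u v * (s * Δ) := by
          gcongr
          · exact hQ u v
          · linarith [Real.add_one_le_exp (s * -Δ)]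
      _ ≤ Q u v * (s * (Q u v + Q u' v')) := by
          gcongr
          · exact hQ u v
          · linarith [hQ u v', hQ u' v]
      _ = _ := by ring

lemma card_filter_le_fQ_sub_fQMean_le (ha : 0 < a) (hQ : ∀ u v, Q u v ∈ Set.Icc 0 a)
    (hV : 0 < fQVarianceProxy d₁ Q) (ht : 0 ≤ t) :
    (((BBG n m d₁ d₂).filter fun X => t ≤ fQ Q X - fQMean d₁ Q).card : ℝ) ≤
      (BBG n m d₁ d₂).card * Real.exp (-(1 / 2) * (fQVarianceProxy d₁ Q / a ^ 2) *
        hfun (a * t / fQVarianceProxy d₁ Q)) := by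
  set V := fQVarianceProxy d₁ Q
  set x := a * t / V with hx
  have hx0 : 0 ≤ x := by positivity
  have ht' : t = x * V / a := by rw [hx]; field_simp
  -- This `θ` minimises the resulting exponent.
  have hθ : 0 ≤ Real.log (1 + x) / (2 * a) :=
    div_nonneg (Real.log_nonneg (le_add_of_nonneg_right hx0)) (by positivity)
  have h := card_filter_le_card_mul_exp hθ
    (sum_exp_mul_fQ_le_of_mem_Icc (d₁ := d₁) (d₂ := d₂) ha hQ hθ) (fQMean d₁ Q + t)
  rw [mul_div_cancel₀ _ (by positivity), Real.exp_log (by positivity)] at h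
  simp only [le_sub_iff_add_le']
  refine h.trans_eq ?_
  rw [ht', hfun]
  congr 2
  field_simp
  ring

lemma card_filter_le_neg_fQ_sub_fQMean_le (hQ : ∀ u v, 0 ≤ Q u v)
    (hV : 0 < fQVarianceProxy d₁ Q) (ht : 0 ≤ t) :
    (((BBG n m d₁ d₂).filter fun X => t ≤ -(fQ Q X - fQMean d₁ Q)).card : ℝ) ≤
      (BBG n m d₁ d₂).card * Real.exp (-(1 / 2 * t ^ 2 / (2 * fQVarianceProxy d₁ Q))) := by
  set V := fQVarianceProxy d₁ Q
  have hθ : 0 ≤ t / (2 * V) := by positivity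
  have h := card_filter_le_card_mul_exp hθ
    (sum_exp_mul_neg_fQ_le_of_nonneg (d₁ := d₁) (d₂ := d₂) hQ hθ) (-fQMean d₁ Q + t)
  simp only [neg_add_le_iff_le_add, ← sub_eq_add_neg] at h
  simp only [neg_sub]
  refine h.trans_eq ?_
  congr 2
  field_simp
  ring

lemma bennett_exp_le_bernstein_exp {V : ℝ} (ha : 0 < a) (hV : 0 < V) (ht : 0 ≤ t) :
    Real.exp (-(1 / 2) * (V / a ^ 2) * hfun (a * t / V)) ≤
      Real.exp (-(1 / 2) * t ^ 2 / (2 * (V + a * t / 3))) := by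
  calc _ ≤ Real.exp (-(1 / 2 * (V / a ^ 2) * ((a * t / V) ^ 2 / (2 * (1 + a * t / V / 3))))) := by
        simp only [neg_mul]
        gcongr
        exact sq_div_le_hfun (by positivity)
    _ = _ := by
        congr 1
        field_simp

lemma gaussian_exp_le_bernstein_exp {V : ℝ} (ha : 0 < a) (hV : 0 < V) (ht : 0 ≤ t) :
    Real.exp (-(1 / 2 * t ^ 2 / (2 * V))) ≤
      Real.exp (-(1 / 2) * t ^ 2 / (2 * (V + a * t / 3))) := by
  rw [neg_mul, neg_div]
  gcongr
  exact le_add_of_nonneg_right (by positivity)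

end Tails

theorem linear_function_concentration_general {n m d₁ d₂ : ℕ} (hd₁ : 0 < d₁)
    (hne : (BBG n m d₁ d₂).Nonempty) {a : ℝ} (ha : 0 < a) {Q : Matrix (Fin n) (Fin m) ℝ}
    (hQ : ∀ u v, Q u v ∈ Set.Icc 0 a) (hQ0 : Q ≠ 0) {t : ℝ} (ht : 0 ≤ t) :
    (((BBG n m d₁ d₂).filter fun X => t ≤ fQ Q X - fQMean d₁ Q).card : ℝ) / (BBG n m d₁ d₂).card ≤
        Real.exp (-(1 / 2) * (fQVarianceProxy d₁ Q / a ^ 2) *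
          hfun (a * t / fQVarianceProxy d₁ Q)) ∧
      (((BBG n m d₁ d₂).filter fun X => t ≤ |fQ Q X - fQMean d₁ Q|).card : ℝ) /
          (BBG n m d₁ d₂).card ≤
        2 * Real.exp (-(1 / 2) * t ^ 2 / (2 * (fQVarianceProxy d₁ Q + a * t / 3))) := by
  have hV := fQVarianceProxy_pos hd₁ hQ0
  have hcard : (0 : ℝ) < (BBG n m d₁ d₂).card := Nat.cast_pos.2 hne.card_pos
  have upper := card_filter_le_fQ_sub_fQMean_le (d₂ := d₂) ha hQ hV ht
  have lower := card_filter_le_neg_fQ_sub_fQMean_le (d₂ := d₂) (fun u v => (hQ u v).1) hV ht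
  rw [div_le_iff₀' hcard, div_le_iff₀' hcard]
  refine ⟨upper, ?_⟩
  have bernstein_of_bennett := bennett_exp_le_bernstein_exp ha hV ht
  have bernstein_of_gaussian := gaussian_exp_le_bernstein_exp ha hV ht
  calc (((BBG n m d₁ d₂).filter fun X => t ≤ |fQ Q X - fQMean d₁ Q|).card : ℝ)
      ≤ ((BBG n m d₁ d₂).filter fun X => t ≤ fQ Q X - fQMean d₁ Q).card +
        ((BBG n m d₁ d₂).filter fun X => t ≤ -(fQ Q X - fQMean d₁ Q)).card :=
        mod_cast card_filter_le_abs_le _ _ _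
    _ ≤ (BBG n m d₁ d₂).card * _ + (BBG n m d₁ d₂).card * _ := add_le_add
        (upper.trans (mul_le_mul_of_nonneg_left bernstein_of_bennett hcard.le))
        (lower.trans (mul_le_mul_of_nonneg_left bernstein_of_gaussian hcard.le))
    _ = _ := by ring

theorem linear_function_concentration (n m d₁ d₂ : ℕ)
    (hn : 0 < n) (hm : 0 < m) (hd₁ : 0 < d₁) (hd₂ : 0 < d₂)
    (hbal : n * d₁ = m * d₂) (hne : (BBG n m d₁ d₂).Nonempty)
    (hdm : d₁ < m)
    (a : ℝ) (ha : 0 < a)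
    (Q : Matrix (Fin n) (Fin m) ℝ) (hQ : ∀ u v, Q u v ∈ Set.Icc (0 : ℝ) a)
    (hQ0 : Q ≠ 0)
    (μ σ2 c₀ γ₀ : ℝ)
    (hμ : μ = (d₁ : ℝ) / m * ∑ u, ∑ v, Q u v)
    (hσ : σ2 = (d₁ : ℝ) / m * ∑ u, ∑ v, (Q u v) ^ 2)
    (hc : c₀ = (1 / 3) * (1 - (d₁ : ℝ) / m))
    (hγ : γ₀ = (d₁ : ℝ) / ((m : ℝ) - d₁))
    (t : ℝ) (ht : 0 ≤ t) :
    ((((BBG n m d₁ d₂).filter fun X => γ₀ * μ + t ≤ fQ Q X - μ).card : ℝ) /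
        ((BBG n m d₁ d₂).card : ℝ)
      ≤ Real.exp (-c₀ * (σ2 / a ^ 2) * hfun (a * t / σ2))) ∧
    ((((BBG n m d₁ d₂).filter fun X => γ₀ * μ + t ≤ |fQ Q X - μ|).card : ℝ) /
        ((BBG n m d₁ d₂).card : ℝ)
      ≤ 2 * Real.exp (-c₀ * t ^ 2 / (2 * (σ2 + a * t / 3)))) := by
  change μ = fQMean d₁ Q at hμ
  change σ2 = fQVarianceProxy d₁ Q at hσ
  have hV : 0 < σ2 := hσ ▸ fQVarianceProxy_pos hd₁ hQ0
  have hh : 0 ≤ hfun (a * t / σ2) := le_trans (by positivity) (sq_div_le_hfun (by positivity))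
  have hc₀ : c₀ ≤ 1 / 2 := by linarith [show 0 ≤ (d₁ : ℝ) / m by positivity]
  have hμ₀ : 0 ≤ μ := hμ ▸ mul_nonneg (by positivity)
    (Finset.sum_nonneg fun u _ => Finset.sum_nonneg fun v _ => (hQ u v).1)
  have hγ₀ : 0 ≤ γ₀ := hγ ▸ div_nonneg (by positivity) (sub_nonneg.2 (mod_cast hdm.le))
  have hslack : t ≤ γ₀ * μ + t := le_add_of_nonneg_left (by positivity)
  have strong := linear_function_concentration_general hd₁ hne ha hQ hQ0 ht
  rw [← hμ, ← hσ] at strong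
  refine ⟨le_trans ?_ (strong.1.trans ?_), le_trans ?_ (strong.2.trans ?_)⟩ <;> gcongr
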